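/- arXiv:2401.02904 — 2 statements merged into one kernel-verified Lean document; each statement's English description precedes it below -/
import Mathlib

section
/- Assume the loss ℓ(w,x,y) takes values in [0,1]. Then the subtask generalization error satisfies |gen_{Q,E_Q}| ≤ E_{Y'~Q_Y}[E_{Z_{[2n]}}[(1/n^{Y'}) Σ_{i=1}^n sqrt(2·max(𝟙{Y_i^-=Y'}, 𝟙{Y_i^+=Y'})·I_{Z_{[2n]}}(W;U_i))]]. -/
open MeasureTheory ProbabilityTheory
open scoped ENNReal

noncomputable section

open Classical in
/-- Kullback–Leibler divergence: `∞` unless `μ ≪ ν` and the log-likelihood ratio is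
`μ`-integrable. -/
def KL {α : Type*} [MeasurableSpace α] (μ ν : Measure α) : ℝ≥0∞ :=
  if μ ≪ ν ∧ Integrable (llr μ ν) μ then ENNReal.ofReal (∫ x, llr μ ν x ∂μ) else ∞

/-- Fair coin measure on `Bool` (the law of a uniform `{−1,+1}` selector, `true ↔ +1`). -/
def coin : Measure Bool :=
  (2 : ℝ≥0∞)⁻¹ • Measure.dirac true + (2 : ℝ≥0∞)⁻¹ • Measure.dirac false

/-- Disintegrated conditional mutual information `I_z(A;B)` given `Z = z`, defined through
regular conditional distributions: `KL(P_{A,B|Z=z} ‖ P_{A|Z=z} ⊗ P_{B|Z=z})`. -/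
def dCMI {Ω γ α β : Type*} [MeasurableSpace Ω] [MeasurableSpace γ]
    [MeasurableSpace α] [StandardBorelSpace α] [Nonempty α]
    [MeasurableSpace β] [StandardBorelSpace β] [Nonempty β]
    (μ : Measure Ω) [IsFiniteMeasure μ]
    (A : Ω → α) (B : Ω → β) (Z : Ω → γ) (z : γ) : ℝ≥0∞ :=
  KL (condDistrib (fun ω => (A ω, B ω)) Z μ z)
    ((condDistrib A Z μ z).prod (condDistrib B Z μ z))

/-- The super-sample entry selected by `u`, i.e. `z^{u}` (the training sample):
`zz = (z⁻, z⁺)` and `u = true` means `+1`. -/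
def trainSel {𝒵 : Type*} (zz : 𝒵 × 𝒵) (u : Bool) : 𝒵 := if u then zz.2 else zz.1

/-- The super-sample entry not selected by `u`, i.e. `z^{−u}` (the test sample). -/
def testSel {𝒵 : Type*} (zz : 𝒵 × 𝒵) (u : Bool) : 𝒵 := if u then zz.1 else zz.2

instance coin_isProb : IsProbabilityMeasure coin := by
  constructor
  simp [coin, ENNReal.inv_two_add_inv_two]

lemma measurable_trainSel {α : Type*} [MeasurableSpace α] :
    Measurable (fun p : (α × α) × Bool => trainSel p.1 p.2) := by
  unfold trainSel
  exact Measurable.ite (measurable_snd (measurableSet_singleton true))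
    (by fun_prop) (by fun_prop)

lemma measurable_testSel {α : Type*} [MeasurableSpace α] :
    Measurable (fun p : (α × α) × Bool => testSel p.1 p.2) := by
  unfold testSel
  exact Measurable.ite (measurable_snd (measurableSet_singleton true))
    (by fun_prop) (by fun_prop)

/-- Donsker–Varadhan combined with Hoeffding's lemma. -/
lemma enorm_integral_le_KL {α : Type*} [MeasurableSpace α] (P Q : Measure α)
    [IsProbabilityMeasure P] [IsProbabilityMeasure Q] (h : α → ℝ) (hm : Measurable h)
    (hb : ∀ x, h x ∈ Set.Icc (-1 : ℝ) 1) (hQ : ∫ x, h x ∂Q = 0) :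
    ‖∫ x, h x ∂P‖ₑ ≤ (2 * KL P Q) ^ (1 / 2 : ℝ) := by
  unfold KL
  split_ifs with hc
  swap
  · simp
  obtain ⟨hac, hint⟩ := hc
  set m := ∫ x, h x ∂P with hmdef
  have hsub := hasSubgaussianMGF_of_mem_Icc_of_integral_eq_zero (μ := Q) (X := h)
    hm.aemeasurable (Filter.Eventually.of_forall hb) hQ
  have hexp := hsub.integrable_exp_mul m
  have hmgf := hsub.mgf_le m
  have hhP : Integrable h P :=
    Integrable.of_mem_Icc (-1) 1 hm.aemeasurable (Filter.Eventually.of_forall hb)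
  have hmP : Integrable (fun x => m * h x) P := hhP.const_mul m
  have hprob : IsProbabilityMeasure (Q.tilted fun x => m * h x) := isProbabilityMeasure_tilted hexp
  have hac' : P ≪ Q.tilted fun x => m * h x := hac.trans (absolutelyContinuous_tilted hexp)
  have h1 := InformationTheory.integral_llr_add_sub_measure_univ_nonneg hac'
    (integrable_llr_tilted_right hac hmP hint hexp)
  rw [integral_llr_tilted_right hac hmP hexp hint, integral_const_mul, ← hmdef] at h1
  simp only [probReal_univ, add_sub_cancel_right] at h1
  have hlog : Real.log (∫ x, Real.exp (m * h x) ∂Q) ≤ m ^ 2 / 2 := by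
    rw [Real.log_le_iff_le_exp (integral_exp_pos hexp)]
    refine hmgf.trans (le_of_eq ?_)
    norm_num
  set K := ∫ x, llr P Q x ∂P
  have hK : m ^ 2 ≤ 2 * K := by nlinarith
  have hK0 : 0 ≤ 2 * K := (sq_nonneg m).trans hK
  have h2 : (2 : ℝ≥0∞) * ENNReal.ofReal K = ENNReal.ofReal (2 * K) := by
    rw [ENNReal.ofReal_mul (by norm_num)]; simp
  rw [h2, ENNReal.ofReal_rpow_of_nonneg hK0 (by norm_num), ← Real.sqrt_eq_rpow,
    Real.enorm_eq_ofReal_abs]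
  exact ENNReal.ofReal_le_ofReal (Real.abs_le_sqrt hK)

lemma sum_lintegral_le {α ι : Type*} [MeasurableSpace α] (μ : Measure α) (s : Finset ι)
    (f : ι → α → ℝ≥0∞) : ∑ i ∈ s, ∫⁻ a, f i a ∂μ ≤ ∫⁻ a, ∑ i ∈ s, f i a ∂μ := by
  classical
  induction s using Finset.induction_on with
  | empty => simp
  | insert j s hj ih =>
    simp only [Finset.sum_insert hj]
    exact (add_le_add le_rfl ih).trans (le_lintegral_add _ _)

/-- The integrand of class `y` for one super-sample pair. -/
def dterm {𝒲 𝒳 𝒴 : Type*} [DecidableEq 𝒴] (ℓ : 𝒲 → 𝒳 → 𝒴 → ℝ) (y : 𝒴)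
    (zz : (𝒳 × 𝒴) × (𝒳 × 𝒴)) (p : 𝒲 × Bool) : ℝ :=
  (if (testSel zz p.2).2 = y then ℓ p.1 (testSel zz p.2).1 (testSel zz p.2).2 else 0) -
  (if (trainSel zz p.2).2 = y then ℓ p.1 (trainSel zz p.2).1 (trainSel zz p.2).2 else 0)

lemma measurable_dterm {𝒲 𝒳 𝒴 : Type*} [MeasurableSpace 𝒲] [MeasurableSpace 𝒳]
    [MeasurableSpace 𝒴] [MeasurableSingletonClass 𝒴] [DecidableEq 𝒴]
    (ℓ : 𝒲 → 𝒳 → 𝒴 → ℝ) (hℓ : Measurable fun p : 𝒲 × 𝒳 × 𝒴 => ℓ p.1 p.2.1 p.2.2) (y : 𝒴) :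
    Measurable (fun q : ((𝒳 × 𝒴) × (𝒳 × 𝒴)) × (𝒲 × Bool) => dterm ℓ y q.1 q.2) := by
  have h1 : Measurable (fun q : ((𝒳 × 𝒴) × (𝒳 × 𝒴)) × (𝒲 × Bool) => testSel q.1 q.2.2) :=
    measurable_testSel.comp (by fun_prop : Measurable
      fun q : ((𝒳 × 𝒴) × (𝒳 × 𝒴)) × (𝒲 × Bool) => (q.1, q.2.2))
  have h2 : Measurable (fun q : ((𝒳 × 𝒴) × (𝒳 × 𝒴)) × (𝒲 × Bool) => trainSel q.1 q.2.2) :=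
    measurable_trainSel.comp (by fun_prop : Measurable
      fun q : ((𝒳 × 𝒴) × (𝒳 × 𝒴)) × (𝒲 × Bool) => (q.1, q.2.2))
  unfold dterm
  refine Measurable.sub ?_ ?_
  · refine Measurable.ite (h1.snd (measurableSet_singleton y)) ?_ measurable_const
    exact hℓ.comp (measurable_snd.fst.prodMk h1)
  · refine Measurable.ite (h2.snd (measurableSet_singleton y)) ?_ measurable_const
    exact hℓ.comp (measurable_snd.fst.prodMk h2)

lemma dterm_mem {𝒲 𝒳 𝒴 : Type*} [DecidableEq 𝒴] (ℓ : 𝒲 → 𝒳 → 𝒴 → ℝ)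
    (hℓ01 : ∀ w x y', ℓ w x y' ∈ Set.Icc (0 : ℝ) 1) (y : 𝒴)
    (zz : (𝒳 × 𝒴) × (𝒳 × 𝒴)) (p : 𝒲 × Bool) : dterm ℓ y zz p ∈ Set.Icc (-1 : ℝ) 1 := by
  unfold dterm
  have h1 := hℓ01 p.1 (testSel zz p.2).1 (testSel zz p.2).2
  have h2 := hℓ01 p.1 (trainSel zz p.2).1 (trainSel zz p.2).2
  rw [Set.mem_Icc] at *
  split_ifs <;> constructor <;> linarith [h1.1, h1.2, h2.1, h2.2]

lemma integral_coin (f : Bool → ℝ) : ∫ u, f u ∂coin = (f true + f false) / 2 := by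
  unfold coin
  rw [integral_add_measure ((Integrable.of_finite (μ := Measure.dirac true)).smul_measure (by simp))
      ((Integrable.of_finite (μ := Measure.dirac false)).smul_measure (by simp)),
    integral_smul_measure, integral_smul_measure]
  simp
  ring

lemma enorm_dterm_le {𝒲 𝒳 𝒴 : Type*} [MeasurableSpace 𝒲] [MeasurableSpace 𝒳]
    [MeasurableSpace 𝒴] [MeasurableSingletonClass 𝒴] [DecidableEq 𝒴]
    (ℓ : 𝒲 → 𝒳 → 𝒴 → ℝ) (hℓ : Measurable fun p : 𝒲 × 𝒳 × 𝒴 => ℓ p.1 p.2.1 p.2.2)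
    (hℓ01 : ∀ w x y', ℓ w x y' ∈ Set.Icc (0 : ℝ) 1) (y : 𝒴)
    (zz : (𝒳 × 𝒴) × (𝒳 × 𝒴)) (P : Measure (𝒲 × Bool)) (PW : Measure 𝒲)
    [IsProbabilityMeasure P] [IsProbabilityMeasure PW] :
    ‖∫ p, dterm ℓ y zz p ∂P‖ₑ ≤ (2 * max (if zz.1.2 = y then (1 : ℝ≥0∞) else 0)
      (if zz.2.2 = y then (1 : ℝ≥0∞) else 0) * KL P (PW.prod coin)) ^ (1 / 2 : ℝ) := by
  by_cases h : zz.1.2 = y ∨ zz.2.2 = y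
  · have hmax : max (if zz.1.2 = y then (1 : ℝ≥0∞) else 0)
      (if zz.2.2 = y then (1 : ℝ≥0∞) else 0) = 1 := by
      rcases h with h | h <;> rw [if_pos h] <;> split_ifs <;> simp
    rw [hmax, mul_one]
    have hm : Measurable (dterm ℓ y zz) :=
      (measurable_dterm ℓ hℓ y).comp (measurable_const.prodMk measurable_id)
    refine enorm_integral_le_KL P (PW.prod coin) _ hm (dterm_mem ℓ hℓ01 y zz) ?_
    rw [integral_prod _ (Integrable.of_mem_Icc (-1) 1 hm.aemeasurable
      (Filter.Eventually.of_forall (dterm_mem ℓ hℓ01 y zz)))]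
    simp [integral_coin, dterm, testSel, trainSel]
  · push Not at h
    have : ∀ p, dterm ℓ y zz p = 0 := by
      rintro ⟨w, u⟩
      cases u <;> simp [dterm, testSel, trainSel, h.1, h.2]
    simp [this]

/-- **Theorem 8 (subtask-CMI bound)**: in the super-sample setting with a bounded loss
`ℓ(w,x,y) ∈ [0,1]` and target label set `A` with `P(Y ∈ A) > 0`, the subtask generalization
error `gen_{Q,E_Q} = E_{Y'∼Q_Y}[gen_{Y'}]` satisfies
`|gen_{Q,E_Q}| ≤ E_{Y'∼Q_Y}[E_{Z_{[2n]}}[(1/n^{Y'}) Σ_i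
    sqrt (2 max(𝟙{Y_i⁻=Y'},𝟙{Y_i⁺=Y'}) I_{Z_{[2n]}}(W;U_i))]]`,
where `Q_Y` is the law of the label conditioned on `{Y ∈ A}`. -/
theorem subtask_CMI_bound
    {Ω 𝒲 𝒳 𝒴 : Type*}
    [mΩ : MeasurableSpace Ω] [StandardBorelSpace Ω] [Nonempty Ω]
    [MeasurableSpace 𝒲] [StandardBorelSpace 𝒲] [Nonempty 𝒲]
    [MeasurableSpace 𝒳] [StandardBorelSpace 𝒳]
    [MeasurableSpace 𝒴] [Countable 𝒴] [MeasurableSingletonClass 𝒴] [DecidableEq 𝒴]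
    (μ : Measure Ω) [IsProbabilityMeasure μ]
    (n : ℕ) (hn : 0 < n)
    (PZ : Measure (𝒳 × 𝒴)) [IsProbabilityMeasure PZ]
    (Z : Ω → Fin n → (𝒳 × 𝒴) × (𝒳 × 𝒴)) (hZ : Measurable Z)
    (U : Ω → Fin n → Bool) (hU : Measurable U)
    (W : Ω → 𝒲) (hW : Measurable W)
    (hlaw : μ.map (fun ω => (Z ω, U ω)) =
      (Measure.pi fun _ : Fin n => PZ.prod PZ).prod (Measure.pi fun _ : Fin n => coin))
    (hSle : MeasurableSpace.comap (fun ω (i : Fin n) => trainSel (Z ω i) (U ω i))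
        inferInstance ≤ mΩ)
    (hMarkov : CondIndepFun
      (MeasurableSpace.comap (fun ω (i : Fin n) => trainSel (Z ω i) (U ω i)) inferInstance)
      hSle W (fun ω => (Z ω, U ω)) μ)
    (ℓ : 𝒲 → 𝒳 → 𝒴 → ℝ) (hℓ : Measurable fun p : 𝒲 × 𝒳 × 𝒴 => ℓ p.1 p.2.1 p.2.2)
    (hℓ01 : ∀ w x y', ℓ w x y' ∈ Set.Icc (0 : ℝ) 1)
    -- the subtask label set
    (A : Set 𝒴) (hA : MeasurableSet A) (hPA : 0 < PZ (Prod.snd ⁻¹' A)) :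
    ENNReal.ofReal
        |∫ y, (∫ ω, (1 / ((n : ℝ) * (PZ (Prod.snd ⁻¹' {y})).toReal)) *
            ∑ i, ((if (testSel (Z ω i) (U ω i)).2 = y then
                    ℓ (W ω) (testSel (Z ω i) (U ω i)).1 (testSel (Z ω i) (U ω i)).2 else 0) -
                  (if (trainSel (Z ω i) (U ω i)).2 = y then
                    ℓ (W ω) (trainSel (Z ω i) (U ω i)).1 (trainSel (Z ω i) (U ω i)).2 else 0))
            ∂μ)
          ∂((PZ.map Prod.snd)[|A])|
      ≤ ∫⁻ y, (∫⁻ z, ENNReal.ofReal (1 / ((n : ℝ) * (PZ (Prod.snd ⁻¹' {y})).toReal)) *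
            ∑ i, (2 * max (if (z i).1.2 = y then (1 : ℝ≥0∞) else 0)
                          (if (z i).2.2 = y then (1 : ℝ≥0∞) else 0) *
                  dCMI μ W (fun ω => U ω i) Z z) ^ (1 / 2 : ℝ)
            ∂(μ.map Z))
          ∂((PZ.map Prod.snd)[|A]) := by
  have hZU (i : Fin n) : condDistrib (fun ω => U ω i) Z μ =ᵐ[μ.map Z]
      Kernel.const _ coin := by
    have hUi : Measurable (fun ω => U ω i) := (measurable_pi_apply i).comp hU
    refine condDistrib_ae_eq_of_measure_eq_compProd Z hUi.aemeasurable ?_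
    have hZmap : μ.map Z = Measure.pi fun _ : Fin n => PZ.prod PZ := by
      have := congrArg Measure.fst hlaw
      rwa [Measure.fst_map_prodMk hU, Measure.fst_prod] at this
    rw [Measure.compProd_const, hZmap]
    have h1 : μ.map (fun ω => (Z ω, U ω i)) =
        (μ.map (fun ω => (Z ω, U ω))).map (Prod.map id (Function.eval i)) := by
      rw [Measure.map_map (by fun_prop) (by fun_prop)]
      rfl
    rw [h1, hlaw, ← Measure.map_prod_map _ _ measurable_id (measurable_pi_apply i), Measure.map_id,
      (measurePreserving_eval (fun _ : Fin n => coin) i).map_eq]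
  have hZprob : IsProbabilityMeasure (μ.map Z) := Measure.isProbabilityMeasure_map hZ.aemeasurable
  rw [← Real.enorm_eq_ofReal_abs]
  refine (enorm_integral_le_lintegral_enorm _).trans (lintegral_mono fun y => ?_)
  change ‖∫ ω, _ * ∑ i, dterm ℓ y (Z ω i) (W ω, U ω i) ∂μ‖ₑ ≤ _
  have hmeas (i : Fin n) : Measurable
      fun q : (Fin n → (𝒳 × 𝒴) × (𝒳 × 𝒴)) × (𝒲 × Bool) => dterm ℓ y (q.1 i) q.2 :=
    (measurable_dterm ℓ hℓ y).comp (by fun_prop : Measurable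
      fun q : (Fin n → (𝒳 × 𝒴) × (𝒳 × 𝒴)) × (𝒲 × Bool) => (q.1 i, q.2))
  have hWU (i : Fin n) : Measurable fun ω => (W ω, U ω i) :=
    hW.prodMk ((measurable_pi_apply i).comp hU)
  have hintq (i : Fin n) (ν : Measure ((Fin n → (𝒳 × 𝒴) × (𝒳 × 𝒴)) × (𝒲 × Bool)))
      [IsFiniteMeasure ν] : Integrable (fun q => dterm ℓ y (q.1 i) q.2) ν :=
    Integrable.of_mem_Icc (-1) 1 (hmeas i).aemeasurable
      (Filter.Eventually.of_forall fun q => dterm_mem ℓ hℓ01 y _ _)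
  have hint (i : Fin n) : Integrable (fun ω => dterm ℓ y (Z ω i) (W ω, U ω i)) μ :=
    Integrable.of_mem_Icc (-1) 1 ((hmeas i).comp (hZ.prodMk (hWU i))).aemeasurable
      (Filter.Eventually.of_forall fun q => dterm_mem ℓ hℓ01 y _ _)
  have key (i : Fin n) : ‖∫ ω, dterm ℓ y (Z ω i) (W ω, U ω i) ∂μ‖ₑ ≤
      ∫⁻ z, (2 * max (if (z i).1.2 = y then (1 : ℝ≥0∞) else 0)
                          (if (z i).2.2 = y then (1 : ℝ≥0∞) else 0) *
                  dCMI μ W (fun ω => U ω i) Z z) ^ (1 / 2 : ℝ) ∂(μ.map Z) := by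
    have e1 : ∫ ω, dterm ℓ y (Z ω i) (W ω, U ω i) ∂μ =
        ∫ z, ∫ p, dterm ℓ y (z i) p ∂(condDistrib (fun ω => (W ω, U ω i)) Z μ z) ∂(μ.map Z) := by
      rw [← Measure.integral_compProd (f := fun q :
          (Fin n → (𝒳 × 𝒴) × (𝒳 × 𝒴)) × (𝒲 × Bool) => dterm ℓ y (q.1 i) q.2) (hintq i _),
        compProd_map_condDistrib (hWU i).aemeasurable,
        integral_map (hZ.prodMk (hWU i)).aemeasurable (hmeas i).aestronglyMeasurable]
    rw [e1]
    refine (enorm_integral_le_lintegral_enorm _).trans (lintegral_mono_ae ?_)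
    filter_upwards [hZU i] with z hz
    unfold dCMI
    rw [hz, Kernel.const_apply]
    exact enorm_dterm_le ℓ hℓ hℓ01 y (z i) _ _
  rw [integral_const_mul, integral_finsetSum _ (fun i _ => hint i), enorm_mul]
  refine le_trans ?_ (lintegral_const_mul_le _ _)
  have hc : ‖1 / ((n : ℝ) * (PZ (Prod.snd ⁻¹' {y})).toReal)‖ₑ =
      ENNReal.ofReal (1 / ((n : ℝ) * (PZ (Prod.snd ⁻¹' {y})).toReal)) :=
    Real.enorm_eq_ofReal (by positivity)
  rw [hc]
  gcongr
  refine (enorm_sum_le _ _).trans ?_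
  exact (Finset.sum_le_sum fun i _ => key i).trans (sum_lintegral_le _ _ _)
end
end

section
/- Assume the loss has the form ℓ(w,x,y) = ℓ(f_w(x),y) with values in [0,1]. Then the subtask generalization error satisfies |gen_{Q,E_Q}| ≤ E_{Y'~Q_Y}[E_{Z_{[2n]}}[(1/n^{Y'}) Σ_{i=1}^n sqrt(2·I_{Z_{[2n]}}(Δ_{Y'}L_i;U_i))]]. -/
open MeasureTheory ProbabilityTheory
open scoped ENNReal

noncomputable section

/-- The sign of the selector. -/
def sgn (b : Bool) : ℝ := if b then 1 else -1

/-- Clipping to `[-1,1]`. -/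
def clip (a : ℝ) : ℝ := max (-1) (min 1 a)

/-- The bounded test function. -/
def tst (p : ℝ × Bool) : ℝ := sgn p.2 * clip p.1

lemma measurable_sgn : Measurable sgn := measurable_from_top

lemma measurable_clip : Measurable clip := by unfold clip; fun_prop

lemma measurable_tst : Measurable tst :=
  (measurable_sgn.comp measurable_snd).mul (measurable_clip.comp measurable_fst)

lemma abs_clip_le (a : ℝ) : |clip a| ≤ 1 := by
  unfold clip
  rw [abs_le]
  exact ⟨le_max_left _ _, max_le (by norm_num) (min_le_left _ _)⟩

lemma abs_tst_le (p : ℝ × Bool) : |tst p| ≤ 1 := by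
  unfold tst sgn
  split_ifs
  · simpa using abs_clip_le p.1
  · simpa using abs_clip_le p.1

lemma clip_eq {a : ℝ} (h : |a| ≤ 1) : clip a = a := by
  unfold clip
  rw [abs_le] at h
  rw [min_eq_right h.2, max_eq_right h.1]

lemma integrable_tst (μ : Measure (ℝ × Bool)) [IsFiniteMeasure μ] : Integrable tst μ :=
  Integrable.of_bound measurable_tst.aestronglyMeasurable 1 (ae_of_all _ abs_tst_le)

instance : IsProbabilityMeasure coin := by
  constructor
  simp [coin, ENNReal.inv_two_add_inv_two]

/-- Donsker–Varadhan. -/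
lemma dv {α : Type*} [MeasurableSpace α] (P Q : Measure α) [IsProbabilityMeasure P]
    [IsProbabilityMeasure Q] (g : α → ℝ) (hPQ : P ≪ Q) (hint : Integrable (llr P Q) P)
    (hg : Integrable g P) (he : Integrable (fun x => Real.exp (g x)) Q) :
    ∫ x, g x ∂P ≤ ∫ x, llr P Q x ∂P + Real.log (∫ x, Real.exp (g x) ∂Q) := by
  have h1 := integral_llr_tilted_right hPQ hg he hint
  have h2 := integrable_llr_tilted_right hPQ hg hint he
  have hac : P ≪ Q.tilted g := hPQ.trans (absolutelyContinuous_tilted he)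
  have : IsProbabilityMeasure (Q.tilted g) := isProbabilityMeasure_tilted he
  have h3 := InformationTheory.integral_llr_add_sub_measure_univ_nonneg hac h2
  simp only [probReal_univ] at h3
  linarith

lemma mgf_bound (R : Measure ℝ) [IsProbabilityMeasure R] (t : ℝ) :
    Integrable (fun p => Real.exp (t * tst p)) (R.prod coin) ∧
    ∫ p, Real.exp (t * tst p) ∂(R.prod coin) ≤ Real.exp (t ^ 2 / 2) := by
  have hi : Integrable (fun p => Real.exp (t * tst p)) (R.prod coin) := by
    refine Integrable.of_bound
      (Real.measurable_exp.comp (measurable_tst.const_mul t)).aestronglyMeasurable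
      (Real.exp |t|) (ae_of_all _ fun p => ?_)
    rw [Real.norm_eq_abs, Real.abs_exp, Real.exp_le_exp]
    calc t * tst p ≤ |t * tst p| := le_abs_self _
      _ = |t| * |tst p| := abs_mul _ _
      _ ≤ |t| * 1 := by gcongr; exact abs_tst_le p
      _ = |t| := mul_one _
  refine ⟨hi, ?_⟩
  rw [integral_prod _ hi]
  have hin : ∀ x : ℝ, ∫ b, Real.exp (t * tst (x, b)) ∂coin = Real.cosh (t * clip x) := by
    intro x
    unfold coin
    rw [integral_add_measure (Integrable.of_finite.smul_measure (by simp))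
      (Integrable.of_finite.smul_measure (by simp))]
    rw [integral_smul_measure, integral_smul_measure, integral_dirac, integral_dirac,
      Real.cosh_eq]
    simp [tst, sgn]
    ring
  simp_rw [hin]
  calc ∫ x, Real.cosh (t * clip x) ∂(R) ≤ ∫ _x, Real.exp (t ^ 2 / 2) ∂(R) := by
        refine integral_mono_of_nonneg (ae_of_all _ fun x => (Real.cosh_pos _).le)
          (integrable_const _) (ae_of_all _ fun x => ?_)
        refine (Real.cosh_le_exp_half_sq _).trans (Real.exp_le_exp.2 ?_)
        have h := abs_clip_le x
        have : clip x ^ 2 ≤ 1 := by rwa [sq_le_one_iff_abs_le_one]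
        rw [mul_pow]
        nlinarith [sq_nonneg t]
    _ = Real.exp (t ^ 2 / 2) := by simp

lemma key (P : Measure (ℝ × Bool)) [IsProbabilityMeasure P] (R : Measure ℝ)
    [IsProbabilityMeasure R] :
    ENNReal.ofReal |∫ p, tst p ∂P| ≤ (2 * KL P (R.prod coin)) ^ (1 / 2 : ℝ) := by
  unfold KL
  split_ifs with h
  · obtain ⟨hac, hint⟩ := h
    set m := ∫ p, tst p ∂P with hm
    obtain ⟨h1, h2⟩ := mgf_bound R m
    have h3 := dv P (R.prod coin) (fun p => m * tst p) hac hint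
      ((integrable_tst P).const_mul m) h1
    rw [integral_const_mul, ← hm] at h3
    have hpos : 0 < ∫ p, Real.exp (m * tst p) ∂(R.prod coin) := integral_exp_pos h1
    have h4 := Real.log_le_log hpos h2
    rw [Real.log_exp] at h4
    set K := ∫ x, llr P (R.prod coin) x ∂P
    have h5 : m ^ 2 ≤ 2 * K := by nlinarith
    have h6 : |m| ≤ (2 * K) ^ (1 / 2 : ℝ) := by
      rw [← Real.sqrt_eq_rpow]
      exact Real.abs_le_sqrt h5
    have h7 : (2 : ℝ≥0∞) * ENNReal.ofReal K = ENNReal.ofReal (2 * K) := by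
      rw [ENNReal.ofReal_mul (by norm_num)]; simp
    rw [h7, ENNReal.ofReal_rpow_of_nonneg ((sq_nonneg m).trans h5) (by norm_num)]
    exact ENNReal.ofReal_le_ofReal h6
  · simp

lemma condDistrib_coin {Ω γ : Type*} [MeasurableSpace Ω] [MeasurableSpace γ]
    (μ : Measure Ω) [IsProbabilityMeasure μ] (n : ℕ) (Z : Ω → γ) (hZ : Measurable Z)
    (U : Ω → Fin n → Bool) (hU : Measurable U) (ρ : Measure γ) [IsProbabilityMeasure ρ]
    (hlaw : μ.map (fun ω => (Z ω, U ω)) = ρ.prod (Measure.pi fun _ : Fin n => coin))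
    (i : Fin n) :
    ∀ᵐ z ∂(μ.map Z), condDistrib (fun ω => U ω i) Z μ z = coin := by
  have hZl : μ.map Z = ρ := by
    have : μ.map Z = (μ.map (fun ω => (Z ω, U ω))).map Prod.fst := by
      rw [Measure.map_map measurable_fst (by fun_prop)]; rfl
    rw [this, hlaw, Measure.map_fst_prod]; simp
  have h : μ.map (fun ω => (Z ω, U ω i)) = μ.map Z ⊗ₘ (Kernel.const γ coin) := by
    rw [Measure.compProd_const, hZl]
    have h2 : μ.map (fun ω => (Z ω, U ω i)) =
        (μ.map (fun ω => (Z ω, U ω))).map (Prod.map id (fun u => u i)) := by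
      rw [Measure.map_map (by fun_prop) (by fun_prop)]; rfl
    rw [h2, hlaw, ← Measure.map_prod_map _ _ measurable_id (measurable_pi_apply i),
      Measure.map_id]
    congr 1
    exact (measurePreserving_eval (fun _ : Fin n => coin) i).map_eq
  filter_upwards [condDistrib_ae_eq_of_measure_eq_compProd Z
    (by fun_prop : Measurable fun ω => U ω i).aemeasurable h] with z hz
  rw [hz, Kernel.const_apply]

lemma inner_bound {Ω γ : Type*} [MeasurableSpace Ω] [MeasurableSpace γ]
    (μ : Measure Ω) [IsProbabilityMeasure μ] (n : ℕ) (Z : Ω → γ) (hZ : Measurable Z)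
    (U : Ω → Fin n → Bool) (hU : Measurable U) (ρ : Measure γ) [IsProbabilityMeasure ρ]
    (hlaw : μ.map (fun ω => (Z ω, U ω)) = ρ.prod (Measure.pi fun _ : Fin n => coin))
    (D : Fin n → Ω → ℝ) (hD : ∀ i, Measurable (D i)) (hD1 : ∀ i ω, |D i ω| ≤ 1)
    (c : ℝ) (hc : 0 ≤ c) :
    ENNReal.ofReal |∫ ω, c * ∑ i, sgn (U ω i) * D i ω ∂μ| ≤
      ∫⁻ z, ENNReal.ofReal c *
        ∑ i, (2 * dCMI μ (D i) (fun ω => U ω i) Z z) ^ (1 / 2 : ℝ) ∂(μ.map Z) := by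
  have : IsProbabilityMeasure (μ.map Z) := Measure.isProbabilityMeasure_map hZ.aemeasurable
  have hUi : ∀ i, Measurable fun ω => U ω i := fun i => by fun_prop
  let κ := fun i => condDistrib (fun ω => (D i ω, U ω i)) Z μ
  have hkap : ∀ i, (μ.map Z) ⊗ₘ (κ i) = μ.map (fun ω => (Z ω, (D i ω, U ω i))) := fun i =>
    compProd_map_condDistrib ((hD i).prodMk (hUi i)).aemeasurable
  have hint : ∀ i, Integrable (fun p : γ × (ℝ × Bool) => tst p.2) ((μ.map Z) ⊗ₘ (κ i)) :=
    fun i => Integrable.of_bound (measurable_tst.comp measurable_snd).aestronglyMeasurable 1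
      (ae_of_all _ fun p => abs_tst_le p.2)
  have hone : ∀ i, ∫ ω, sgn (U ω i) * D i ω ∂μ = ∫ z, ∫ p, tst p ∂(κ i z) ∂(μ.map Z) := by
    intro i
    rw [← Measure.integral_compProd (hint i), hkap i, integral_map
      (hZ.prodMk ((hD i).prodMk (hUi i))).aemeasurable
      (by exact (measurable_tst.comp measurable_snd).aestronglyMeasurable)]
    simp only [tst, clip_eq (hD1 i _)]
  have hint2 : ∀ i, Integrable (fun z => ∫ p, tst p ∂(κ i z)) (μ.map Z) := fun i =>
    Integrable.of_bound
      (measurable_tst.stronglyMeasurable.integral_kernel (κ := κ i)).aestronglyMeasurable 1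
      (ae_of_all _ fun z => (norm_integral_le_of_norm_le_const
        (ae_of_all _ abs_tst_le)).trans (by simp [κ]))
  have hint3 : ∀ i, Integrable (fun ω => sgn (U ω i) * D i ω) μ := by
    intro i
    have h := (integrable_tst (μ.map fun ω => (D i ω, U ω i))).comp_measurable
      ((hD i).prodMk (hUi i))
    simpa only [Function.comp_def, tst, clip_eq (hD1 i _)] using h
  have heq : ∫ ω, c * ∑ i, sgn (U ω i) * D i ω ∂μ =
      ∫ z, c * ∑ i, ∫ p, tst p ∂(κ i z) ∂(μ.map Z) := by
    rw [integral_const_mul, integral_const_mul, integral_finsetSum _ fun i _ => hint3 i,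
      integral_finsetSum _ fun i _ => hint2 i]
    simp_rw [hone]
  rw [heq, ← Real.enorm_eq_ofReal_abs]
  refine (enorm_integral_le_lintegral_enorm _).trans (lintegral_mono_ae ?_)
  have hall : ∀ᵐ z ∂(μ.map Z), ∀ i, condDistrib (fun ω => U ω i) Z μ z = coin :=
    ae_all_iff.2 fun i => condDistrib_coin μ n Z hZ U hU ρ hlaw i
  filter_upwards [hall] with z hz
  rw [enorm_mul, Real.enorm_eq_ofReal hc]
  gcongr
  refine (enorm_sum_le _ _).trans (Finset.sum_le_sum fun i _ => ?_)
  rw [Real.enorm_eq_ofReal_abs]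
  unfold dCMI
  rw [hz i]
  exact key _ _

/-- **Theorem 9 (subtask-Δ_YL-CMI bound)**: in the super-sample setting with predictions and
a bounded loss `ℓ(f_w(x),y) ∈ [0,1]` and target label set `A` with `P(Y ∈ A) > 0`, the
subtask generalization error `gen_{Q,E_Q} = E_{Y'∼Q_Y}[gen_{Y'}]` satisfies
`|gen_{Q,E_Q}| ≤ E_{Y'∼Q_Y}[E_{Z_{[2n]}}[(1/n^{Y'}) Σ_i sqrt (2 I_{Z_{[2n]}}(Δ_{Y'}L_i;U_i))]]`,
where `Q_Y` is the law of the label conditioned on `{Y ∈ A}`. -/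
theorem subtask_deltaL_CMI_bound
    {Ω 𝒲 𝒳 𝒴 Yhat : Type*}
    [mΩ : MeasurableSpace Ω] [StandardBorelSpace Ω] [Nonempty Ω]
    [MeasurableSpace 𝒲] [StandardBorelSpace 𝒲] [Nonempty 𝒲]
    [MeasurableSpace 𝒳] [StandardBorelSpace 𝒳]
    [MeasurableSpace 𝒴] [Countable 𝒴] [MeasurableSingletonClass 𝒴] [DecidableEq 𝒴]
    [MeasurableSpace Yhat] [StandardBorelSpace Yhat] [Nonempty Yhat]
    (μ : Measure Ω) [IsProbabilityMeasure μ]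
    (n : ℕ) (hn : 0 < n)
    (PZ : Measure (𝒳 × 𝒴)) [IsProbabilityMeasure PZ]
    (Z : Ω → Fin n → (𝒳 × 𝒴) × (𝒳 × 𝒴)) (hZ : Measurable Z)
    (U : Ω → Fin n → Bool) (hU : Measurable U)
    (W : Ω → 𝒲) (hW : Measurable W)
    (hlaw : μ.map (fun ω => (Z ω, U ω)) =
      (Measure.pi fun _ : Fin n => PZ.prod PZ).prod (Measure.pi fun _ : Fin n => coin))
    (hSle : MeasurableSpace.comap (fun ω (i : Fin n) => trainSel (Z ω i) (U ω i))
        inferInstance ≤ mΩ)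
    (hMarkov : CondIndepFun
      (MeasurableSpace.comap (fun ω (i : Fin n) => trainSel (Z ω i) (U ω i)) inferInstance)
      hSle W (fun ω => (Z ω, U ω)) μ)
    (f : 𝒲 → 𝒳 → Yhat) (hf : Measurable fun p : 𝒲 × 𝒳 => f p.1 p.2)
    (ℓ : Yhat → 𝒴 → ℝ) (hℓ : Measurable fun p : Yhat × 𝒴 => ℓ p.1 p.2)
    (hℓ01 : ∀ p y', ℓ p y' ∈ Set.Icc (0 : ℝ) 1)
    -- the subtask label set
    (A : Set 𝒴) (hA : MeasurableSet A) (hPA : 0 < PZ (Prod.snd ⁻¹' A)) :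
    ENNReal.ofReal
        |∫ y, (∫ ω, (1 / ((n : ℝ) * (PZ (Prod.snd ⁻¹' {y})).toReal)) *
            ∑ i, ((if (testSel (Z ω i) (U ω i)).2 = y then
                    ℓ (f (W ω) (testSel (Z ω i) (U ω i)).1) (testSel (Z ω i) (U ω i)).2 else 0) -
                  (if (trainSel (Z ω i) (U ω i)).2 = y then
                    ℓ (f (W ω) (trainSel (Z ω i) (U ω i)).1) (trainSel (Z ω i) (U ω i)).2 else 0))
            ∂μ)
          ∂((PZ.map Prod.snd)[|A])|
      ≤ ∫⁻ y, (∫⁻ z, ENNReal.ofReal (1 / ((n : ℝ) * (PZ (Prod.snd ⁻¹' {y})).toReal)) *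
            ∑ i, (2 *
                  dCMI μ
                    (fun ω =>
                      (if (Z ω i).1.2 = y then ℓ (f (W ω) ((Z ω i).1.1)) ((Z ω i).1.2) else 0) -
                        (if (Z ω i).2.2 = y then ℓ (f (W ω) ((Z ω i).2.1)) ((Z ω i).2.2) else 0))
                    (fun ω => U ω i) Z z) ^ (1 / 2 : ℝ)
            ∂(μ.map Z))
          ∂((PZ.map Prod.snd)[|A]) := by
  rw [← Real.enorm_eq_ofReal_abs]
  refine (enorm_integral_le_lintegral_enorm _).trans (lintegral_mono fun y => ?_)
  rw [Real.enorm_eq_ofReal_abs]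
  have hM : ∀ (s : Ω → 𝒳 × 𝒴), Measurable s →
      Measurable fun ω => if (s ω).2 = y then ℓ (f (W ω) (s ω).1) (s ω).2 else 0 := by
    intro s hs
    refine Measurable.ite ?_ ?_ measurable_const
    · exact (measurable_snd.comp hs) (measurableSet_singleton y)
    · exact hℓ.comp ((hf.comp (hW.prodMk (measurable_fst.comp hs))).prodMk
        (measurable_snd.comp hs))
  have h01 : ∀ (w : 𝒲) (s : 𝒳 × 𝒴),
      (if s.2 = y then ℓ (f w s.1) s.2 else 0) ∈ Set.Icc (0 : ℝ) 1 := by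
    intro w s
    split_ifs
    · exact hℓ01 _ _
    · simp
  have hZi : ∀ i, Measurable fun ω => Z ω i := fun i => by fun_prop
  have hb := inner_bound μ n Z hZ U hU _ hlaw
    (fun i ω => (if (Z ω i).1.2 = y then ℓ (f (W ω) ((Z ω i).1.1)) ((Z ω i).1.2) else 0) -
      (if (Z ω i).2.2 = y then ℓ (f (W ω) ((Z ω i).2.1)) ((Z ω i).2.2) else 0))
    (fun i => (hM _ (measurable_fst.comp (hZi i))).sub (hM _ (measurable_snd.comp (hZi i))))
    (fun i ω => by
      have h1 := h01 (W ω) (Z ω i).1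
      have h2 := h01 (W ω) (Z ω i).2
      rw [abs_le]
      constructor <;> linarith [h1.1, h1.2, h2.1, h2.2])
    (1 / ((n : ℝ) * (PZ (Prod.snd ⁻¹' {y})).toReal)) (by positivity)
  refine le_trans (le_of_eq ?_) hb
  congr 3
  funext ω
  congr 2
  funext i
  cases hu : U ω i <;> simp [testSel, trainSel, sgn]
end
end
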